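/- Let ε > 0 and suppose w^{SAM} ∈ ℝ is a global maximizer of the SAM objective g_ε(w) = min_{δ ∈ [−ε, ε]} u(w + δ). Then the two endpoint values are equal: u(w^{SAM} − ε) = u(w^{SAM} + ε). -/

import Mathlib

/-!
The derivative of `u` at `w` has the sign of `p * exp (-2 * η * w) - (1 - p)` (up to a positive
factor), so `u` strictly increases up to `m = log (p / (1 - p)) / (2 * η)` and strictly decreases
afterwards (`u_strictMonoOn`, `u_strictAntiOn`). For such a unimodal function the minimum over an
interval is attained at an endpoint, so `g ε w = min (u (w - ε)) (u (w + ε))`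
(`sInf_image_eq_min`). If one endpoint value were strictly smaller than the other, sliding the
window slightly towards the larger one would raise the smaller value while, by continuity, keeping
the other above it, contradicting maximality (`endpoint_not_lt`).
-/

/-- The standard normal CDF. -/
noncomputable def Phi (t : ℝ) : ℝ :=
  (Real.sqrt (2 * Real.pi))⁻¹ * ∫ s in Set.Iic t, Real.exp (-(s ^ 2) / 2)

/-- The expected clean accuracy `u(w)` for parameters `p`, `η`, `n`. -/
noncomputable def u (p η : ℝ) (n : ℕ) (w : ℝ) : ℝ :=
  p * Phi ((w + η * n) / Real.sqrt n) + (1 - p) * Phi ((-w + η * n) / Real.sqrt n)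

/-- The SAM objective with weight-perturbation radius `ε`. -/
noncomputable def g (p η : ℝ) (n : ℕ) (ε w : ℝ) : ℝ :=
  sInf ((fun δ : ℝ => u p η n (w + δ)) '' Set.Icc (-ε) ε)

open Set Filter Topology

/-- A unimodal function is quasi-concave: on an interval it is bounded below by its smaller
endpoint value. -/
lemma min_le_of_unimodal {f : ℝ → ℝ} {m : ℝ} (h1 : StrictMonoOn f (Iic m))
    (h2 : StrictAntiOn f (Ici m)) {a b x : ℝ} (ha : a ≤ x) (hb : x ≤ b) :
    min (f a) (f b) ≤ f x := by
  rcases le_total x m with hx | hx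
  · exact (min_le_left _ _).trans (h1.monotoneOn (ha.trans hx) hx ha)
  · exact (min_le_right _ _).trans (h2.antitoneOn hx (hx.trans hb) hb)

lemma sInf_image_eq_min {f : ℝ → ℝ} {m : ℝ} (h1 : StrictMonoOn f (Iic m))
    (h2 : StrictAntiOn f (Ici m)) {ε : ℝ} (hε : 0 < ε) (w : ℝ) :
    sInf ((fun δ : ℝ => f (w + δ)) '' Icc (-ε) ε) = min (f (w - ε)) (f (w + ε)) := by
  have hlb : ∀ y ∈ (fun δ : ℝ => f (w + δ)) '' Icc (-ε) ε,
      min (f (w - ε)) (f (w + ε)) ≤ y := by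
    rintro _ ⟨δ, ⟨h, h'⟩, rfl⟩
    exact min_le_of_unimodal h1 h2 (by linarith) (by linarith)
  refine le_antisymm (le_min ?_ ?_) (le_csInf ⟨_, ⟨0, ⟨by linarith, hε.le⟩, rfl⟩⟩ hlb)
  · exact csInf_le ⟨_, hlb⟩ ⟨-ε, ⟨le_rfl, by linarith⟩, by simp [sub_eq_add_neg]⟩
  · exact csInf_le ⟨_, hlb⟩ ⟨ε, ⟨by linarith, le_rfl⟩, rfl⟩

/-- At a maximizer of the smaller endpoint value, the left endpoint value is not strictly the
smaller one. The other inequality follows by applying this to the reflection of `f`. -/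
lemma endpoint_not_lt {f : ℝ → ℝ} {m : ℝ} (hf : Continuous f) (h1 : StrictMonoOn f (Iic m))
    (h2 : StrictAntiOn f (Ici m)) {ε : ℝ} (hε : 0 < ε) {w : ℝ}
    (hmax : ∀ x, min (f (x - ε)) (f (x + ε)) ≤ min (f (w - ε)) (f (w + ε))) :
    ¬ f (w - ε) < f (w + ε) := by
  intro hlt
  have hm : w - ε < m := by
    by_contra! h
    exact lt_asymm hlt (h2 h (h.trans (by linarith) : m ≤ w + ε) (by linarith))
  have hev : ∀ᶠ x in 𝓝[>] w, f (w - ε) < f (x + ε) :=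
    ((hf.comp (continuous_id.add continuous_const)).continuousAt.eventually
      (lt_mem_nhds hlt)).filter_mono nhdsWithin_le_nhds
  have hev2 : ∀ᶠ x in 𝓝[>] w, x < m + ε :=
    (gt_mem_nhds (by linarith : w < m + ε)) |> fun h => nhdsWithin_le_nhds h
  obtain ⟨x, hx, hxm, hxw⟩ := (hev.and (hev2.and self_mem_nhdsWithin)).exists
  have hxw : w < x := hxw
  have h3 : f (w - ε) < f (x - ε) :=
    h1 hm.le (by simp only [mem_Iic]; linarith) (by linarith)
  exact absurd (hmax x) (not_le.2 ((min_le_left _ _).trans_lt (lt_min h3 hx)))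

lemma hasDerivAt_Phi (t : ℝ) :
    HasDerivAt Phi ((Real.sqrt (2 * Real.pi))⁻¹ * Real.exp (-(t ^ 2) / 2)) t := by
  have hint : MeasureTheory.Integrable (fun s : ℝ => Real.exp (-(s ^ 2) / 2)) := by
    convert integrable_exp_neg_mul_sq (b := 1 / 2) (by norm_num) using 3
    ring
  have hc : Continuous (fun s : ℝ => Real.exp (-(s ^ 2) / 2)) := by fun_prop
  have key : Phi = fun t => (Real.sqrt (2 * Real.pi))⁻¹ *
      ((∫ s in (0 : ℝ)..t, Real.exp (-(s ^ 2) / 2)) +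
        ∫ s in Iic (0 : ℝ), Real.exp (-(s ^ 2) / 2)) := by
    funext t
    rw [Phi, ← intervalIntegral.integral_Iic_sub_Iic hint.integrableOn hint.integrableOn]
    ring
  rw [key]
  exact ((intervalIntegral.integral_hasDerivAt_right (hc.intervalIntegrable _ _)
    (hc.stronglyMeasurableAtFilter _ _) hc.continuousAt).add_const _).const_mul _

/-- The derivative of `u`, with the Gaussian density at `(-w + η * n) / √n` factored out. The
ratio of the two densities is `exp (-2 * η * w)`. -/
lemma hasDerivAt_u (p η : ℝ) (n : ℕ) (hn : 0 < n) (w : ℝ) :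
    HasDerivAt (u p η n) ((Real.sqrt (2 * Real.pi))⁻¹ / Real.sqrt n *
      Real.exp (-(((-w + η * n) / Real.sqrt n) ^ 2) / 2) *
      (p * Real.exp (-2 * η * w) - (1 - p))) w := by
  have hn' : (0 : ℝ) < n := by exact_mod_cast hn
  have hA : HasDerivAt (fun w : ℝ => (w + η * n) / Real.sqrt n) (1 / Real.sqrt n) w :=
    ((hasDerivAt_id w).add_const _).div_const _
  have hB : HasDerivAt (fun w : ℝ => (-w + η * n) / Real.sqrt n) (-1 / Real.sqrt n) w :=
    ((hasDerivAt_id w).neg.add_const _).div_const _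
  have h := (((hasDerivAt_Phi _).comp w hA).const_mul p).add
    (((hasDerivAt_Phi _).comp w hB).const_mul (1 - p))
  have hexp : Real.exp (-(((w + η * n) / Real.sqrt n) ^ 2) / 2) =
      Real.exp (-(((-w + η * n) / Real.sqrt n) ^ 2) / 2) * Real.exp (-2 * η * w) := by
    rw [← Real.exp_add]
    congr 1
    rw [div_pow, div_pow, Real.sq_sqrt hn'.le]
    field_simp
    ring
  refine HasDerivAt.congr_deriv h ?_
  rw [hexp]
  ring

/-- `p * exp (-2 * η * w) - (1 - p)` is positive left of the mode of `u` and negative right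
of it. -/
lemma threshold {p η : ℝ} (hp : 0 < p) (hp1 : p < 1) (hη : 0 < η) (w : ℝ) :
    (w < Real.log (p / (1 - p)) / (2 * η) → 0 < p * Real.exp (-2 * η * w) - (1 - p)) ∧
    (Real.log (p / (1 - p)) / (2 * η) < w → p * Real.exp (-2 * η * w) - (1 - p) < 0) := by
  have hq : 0 < 1 - p := by linarith
  have hr : 1 - p = p * Real.exp (-Real.log (p / (1 - p))) := by
    rw [Real.exp_neg, Real.exp_log (by positivity)]
    field_simp
  constructor <;> intro h
  · rw [lt_div_iff₀ (by positivity)] at h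
    have := mul_lt_mul_of_pos_left
      (Real.exp_lt_exp.2 (by linarith : -Real.log (p / (1 - p)) < -2 * η * w)) hp
    linarith
  · rw [div_lt_iff₀ (by positivity)] at h
    have := mul_lt_mul_of_pos_left
      (Real.exp_lt_exp.2 (by linarith : -2 * η * w < -Real.log (p / (1 - p)))) hp
    linarith

lemma u_continuous (p η : ℝ) (n : ℕ) (hn : 0 < n) : Continuous (u p η n) :=
  continuous_iff_continuousAt.2 fun w => (hasDerivAt_u p η n hn w).continuousAt

lemma u_strictMonoOn {p η : ℝ} {n : ℕ} (hp : 0 < p) (hp1 : p < 1) (hη : 0 < η) (hn : 0 < n) :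
    StrictMonoOn (u p η n) (Iic (Real.log (p / (1 - p)) / (2 * η))) := by
  refine strictMonoOn_of_deriv_pos (convex_Iic _) (u_continuous p η n hn).continuousOn ?_
  intro w hw
  rw [interior_Iic] at hw
  rw [(hasDerivAt_u p η n hn w).deriv]
  exact mul_pos (by positivity) ((threshold hp hp1 hη w).1 hw)

lemma u_strictAntiOn {p η : ℝ} {n : ℕ} (hp : 0 < p) (hp1 : p < 1) (hη : 0 < η) (hn : 0 < n) :
    StrictAntiOn (u p η n) (Ici (Real.log (p / (1 - p)) / (2 * η))) := by
  refine strictAntiOn_of_deriv_neg (convex_Ici _) (u_continuous p η n hn).continuousOn ?_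
  intro w hw
  rw [interior_Ici] at hw
  rw [(hasDerivAt_u p η n hn w).deriv]
  exact mul_neg_of_pos_of_neg (by positivity) ((threshold hp hp1 hη w).2 hw)

/-- At a global maximizer of the SAM objective, the two endpoint values of `u` agree. -/
theorem sam_endpoint_balance
    (p η : ℝ) (n : ℕ) (hp : 1 / 2 < p) (hp1 : p < 1) (hη : 0 < η) (hn : 0 < n)
    (ε : ℝ) (hε : 0 < ε) (wSAM : ℝ) (hmax : ∀ w : ℝ, g p η n ε w ≤ g p η n ε wSAM) :
    u p η n (wSAM - ε) = u p η n (wSAM + ε) := by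
  have hp0 : 0 < p := by linarith
  have h1 := u_strictMonoOn hp0 hp1 hη hn
  have h2 := u_strictAntiOn hp0 hp1 hη hn
  have hc := u_continuous p η n hn
  simp only [g, sInf_image_eq_min h1 h2 hε] at hmax
  refine le_antisymm ?_ (not_lt.1 (endpoint_not_lt hc h1 h2 hε hmax))
  -- The reflection `x ↦ u (-x)` is unimodal about `-m`, with maximizer `-wSAM`.
  have h := endpoint_not_lt (f := fun x => u p η n (-x)) (w := -wSAM)
    (m := -(Real.log (p / (1 - p)) / (2 * η))) (hc.comp continuous_neg)
    (fun a ha b hb hab => h2 (mem_Ici.2 (le_neg_of_le_neg hb))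
      (mem_Ici.2 (le_neg_of_le_neg ha)) (neg_lt_neg hab))
    (fun a ha b hb hab => h1 (mem_Iic.2 (neg_le_of_neg_le hb))
      (mem_Iic.2 (neg_le_of_neg_le ha)) (neg_lt_neg hab)) hε
    (fun x => by
      have e (y : ℝ) : -(y - ε) = -y + ε ∧ -(y + ε) = -y - ε := ⟨by ring, by ring⟩
      simpa only [(e _).1, (e _).2, neg_neg, min_comm] using hmax (-x))
  have e1 : -(-wSAM - ε) = wSAM + ε := by ring
  have e2 : -(-wSAM + ε) = wSAM - ε := by ring
  simp only [e1, e2] at h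
  exact not_lt.1 h
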